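/- For every p₀ ∈ (0, √2) there is a unique q̃ ∈ (0, 1) with g(q̃) = p₀²/2, and the half-period satisfies 𝒯(p₀)/2 = 2 ∫₀^{q̃} dq / √(p₀² − 2 g(q)). -/

import Mathlib

open Real Set Filter MeasureTheory
open scoped Topology

/-- The potential `g` from the Hamiltonian `H(x,p) = p²/2 + g(x)`. -/
noncomputable def g (x : ℝ) : ℝ := if |x| ≤ 1 then 1 - (1 - x ^ 2) ^ 4 else 1

/-- The derivative of `g`. -/
noncomputable def g' (x : ℝ) : ℝ := if |x| ≤ 1 then 8 * x * (1 - x ^ 2) ^ 3 else 0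

/-- `(q, p)` is a (global) solution of the Hamiltonian system (HS): `q̇ = p`, `ṗ = -g'(q)`. -/
def IsHSSol (q p : ℝ → ℝ) : Prop :=
  (∀ t : ℝ, HasDerivAt q (p t) t) ∧ (∀ t : ℝ, HasDerivAt p (-(g' (q t))) t)

/-- `F` is the flow of (HS): `F t q₀ p₀ = (q t, p t)` for the solution with data `(q₀, p₀)`. -/
def IsHSFlow (F : ℝ → ℝ → ℝ → ℝ × ℝ) : Prop :=
  ∀ q₀ p₀ : ℝ,
    IsHSSol (fun t => (F t q₀ p₀).1) (fun t => (F t q₀ p₀).2) ∧ F 0 q₀ p₀ = (q₀, p₀)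

/-- The set `([0,∞) × {2}) ∪ ({0} × (0,2])`, codomain of the map `Δ`. -/
def Dset : Set (ℝ × ℝ) := (Ici (0:ℝ) ×ˢ ({2} : Set ℝ)) ∪ ({(0:ℝ)} ×ˢ Ioc (0:ℝ) 2)

/-- `T` is the smallest positive period of `q`. -/
def IsSmallestPeriod (q : ℝ → ℝ) (T : ℝ) : Prop :=
  0 < T ∧ Function.Periodic q T ∧ ∀ T' : ℝ, 0 < T' → Function.Periodic q T' → T ≤ T'

/-- `T` is the period map `𝒯`, assigning to `p₀ ∈ (0, √2)` the smallest positive period of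
the `q`-component of the solution of (HS) with initial datum `(0, p₀)`. -/
def IsPeriodMap (F : ℝ → ℝ → ℝ → ℝ × ℝ) (T : ℝ → ℝ) : Prop :=
  ∀ p₀ ∈ Ioo (0:ℝ) (Real.sqrt 2), IsSmallestPeriod (fun t => (F t 0 p₀).1) (T p₀)

/-- `Δ` associates to `(t,x)` the datum in `Dset` whose orbit stays positive on `(0,t)`
and reaches `x` at time `t`. -/
def IsDeltaMap (F : ℝ → ℝ → ℝ → ℝ × ℝ) (Δ : ℝ → ℝ → ℝ × ℝ) : Prop :=
  ∀ t x : ℝ, 0 < t → 0 < x →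
    Δ t x ∈ Dset ∧ (F t (Δ t x).1 (Δ t x).2).1 = x ∧
      ∀ s ∈ Ioo (0:ℝ) t, 0 < (F s (Δ t x).1 (Δ t x).2).1

/-- The solution `u` of the conservation law built from the flow `F` and the map `Δ`
(extended by `0` at `x = 0`). -/
noncomputable def usol (F : ℝ → ℝ → ℝ → ℝ × ℝ) (Δ : ℝ → ℝ → ℝ × ℝ) (t x : ℝ) : ℝ :=
  if 0 < x then (F t (Δ t x).1 (Δ t x).2).2
  else if x < 0 then -(F t (Δ t (-x)).1 (Δ t (-x)).2).2
  else 0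

/-!
Let `q` solve `q̈ = -V'(q)` with `V'` odd, `q 0 = 0` and `q̇ 0 > 0`. If `q` is periodic, Rolle's
theorem gives a first time `τ > 0` with `q̇ τ = 0`. By uniqueness `q` is odd and symmetric about
`τ`, hence antiperiodic with antiperiod `2τ`, and it is positive on `(0, 2τ)`; so its smallest
period is `4τ`. On `[0, τ]` conservation of energy reads `q̇ = √(2(E - V(q)))`, and the substitution
`x = q t` turns `τ` into the integral of `1 / √(2(E - V))` from `0` to the amplitude `q τ`. For
`V = g` the amplitude is the unique `q̃ ∈ (0, 1)` at which the potential equals the energy.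
-/

section Calculus

theorem exists_first_zero {f : ℝ → ℝ} {a b : ℝ} (hf : ContinuousOn f (Icc a b)) (hab : a ≤ b)
    (ha : 0 < f a) (hb : f b = 0) : ∃ c ∈ Ioc a b, f c = 0 ∧ ∀ t ∈ Ico a c, 0 < f t := by
  have hcompact : IsCompact (Icc a b ∩ f ⁻¹' {0}) :=
    isCompact_Icc.of_isClosed_subset
      (hf.preimage_isClosed_of_isClosed isClosed_Icc isClosed_singleton) inter_subset_left
  obtain ⟨c, ⟨hc, hfc⟩, hmin⟩ := hcompact.exists_isLeast ⟨b, right_mem_Icc.2 hab, hb⟩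
  have hac : a ≠ c := by
    rintro rfl
    exact ha.ne' hfc
  refine ⟨c, ⟨hc.1.lt_of_ne hac, hc.2⟩, hfc, fun t ht ↦ ?_⟩
  by_contra! hft
  have htb : Icc a t ⊆ Icc a b := Icc_subset_Icc_right (ht.2.le.trans hc.2)
  obtain ⟨z, hz, hfz⟩ := intermediate_value_Icc' ht.1 (hf.mono htb) ⟨hft, ha.le⟩
  exact (hz.2.trans_lt ht.2).not_ge (hmin ⟨htb hz, hfz⟩)

theorem integral_one_div_eq_sub_of_hasDerivAt {q φ : ℝ → ℝ} {a b : ℝ} (hab : a ≤ b)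
    (hq : ContinuousOn q (Icc a b)) (hderiv : ∀ t ∈ Ioo a b, HasDerivAt q (φ (q t)) t)
    (hφ : ∀ t ∈ Ioo a b, 0 < φ (q t)) :
    ∫ x in q a..q b, 1 / φ x = b - a := by
  rw [← intervalIntegral.integral_comp_mul_deriv_of_deriv_nonneg (f' := φ ∘ q)
    (by rwa [uIcc_of_le hab])
    (by rwa [min_eq_left hab, max_eq_right hab])
    (by rw [min_eq_left hab, max_eq_right hab]; exact fun t ht ↦ (hφ t ht).le)]
  have hone : EqOn (fun t ↦ ((fun x ↦ 1 / φ x) ∘ q) t * (φ ∘ q) t) (fun _ ↦ 1) (Ioo a b) :=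
    fun t ht ↦ one_div_mul_cancel (hφ t ht).ne'
  rw [intervalIntegral.integral_of_le hab, integral_Ioc_eq_integral_Ioo,
    setIntegral_congr_fun measurableSet_Ioo hone]
  simp [hab]

theorem hasDerivAt_max_zero_pow (n : ℕ) (y : ℝ) :
    HasDerivAt (fun x : ℝ ↦ max x 0 ^ (n + 2)) ((n + 2) * max y 0 ^ (n + 1)) y := by
  refine hasDerivAt_of_hasDerivAt_of_ne' (g := fun x ↦ (n + 2) * max x 0 ^ (n + 1)) (x := 0)
    (fun x hx ↦ ?_) (by fun_prop) (by fun_prop) y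
  rcases hx.lt_or_gt with hneg | hpos
  · have hzero : (fun x : ℝ ↦ max x 0 ^ (n + 2)) =ᶠ[𝓝 x] fun _ ↦ 0 := by
      filter_upwards [Iio_mem_nhds hneg] with z hz
      simp [max_eq_right (mem_Iio.1 hz).le]
    simpa [max_eq_right hneg.le] using (hasDerivAt_const x (0 : ℝ)).congr_of_eventuallyEq hzero
  · have hpow : (fun x : ℝ ↦ max x 0 ^ (n + 2)) =ᶠ[𝓝 x] fun x ↦ x ^ (n + 2) := by
      filter_upwards [Ioi_mem_nhds hpos] with z hz
      rw [max_eq_left (mem_Ioi.1 hz).le]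
    simpa [max_eq_left hpos.le] using (hasDerivAt_pow (n + 2) x).congr_of_eventuallyEq hpow

end Calculus

section SmallestPeriod

variable {q : ℝ → ℝ} {c S T : ℝ}

theorem IsSmallestPeriod.unique (hS : IsSmallestPeriod q S) (hT : IsSmallestPeriod q T) : S = T :=
  le_antisymm (hS.2.2 T hT.1 hT.2.1) (hT.2.2 S hS.1 hS.2.1)

theorem isSmallestPeriod_two_mul_of_antiperiodic (hc : 0 < c) (hq : Function.Antiperiodic q c)
    (hpos : ∀ t ∈ Ioo 0 c, 0 < q t) : IsSmallestPeriod q (2 * c) := by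
  refine ⟨by positivity, hq.periodic_two_mul, fun T hT hper ↦ ?_⟩
  by_contra! hlt
  -- A period `T < 2c` maps `c - T/2`, where `q > 0`, to `c + T/2`, where `q < 0`.
  have hleft : 0 < q (c - T / 2) := hpos _ ⟨by linarith, by linarith⟩
  have hmid : 0 < q (T / 2) := hpos _ ⟨by linarith, by linarith⟩
  have hneg : q (c - T / 2) = -q (T / 2) := by
    rw [← hper, ← hq]
    ring_nf
  linarith

end SmallestPeriod

section Uniqueness

variable {E : Type*} [NormedAddCommGroup E] [NormedSpace ℝ E]

theorem ode_solution_unique_of_locallyLipschitz {v : E → E} (hv : LocallyLipschitz v)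
    {x y : ℝ → E} (hx : ∀ t, HasDerivAt x (v (x t)) t) (hy : ∀ t, HasDerivAt y (v (y t)) t)
    {t₀ : ℝ} (h : x t₀ = y t₀) : x = y := by
  have hx_cont : Continuous x := continuous_iff_continuousAt.2 fun t ↦ (hx t).continuousAt
  have hy_cont : Continuous y := continuous_iff_continuousAt.2 fun t ↦ (hy t).continuousAt
  ext t
  obtain ⟨a, b, ht, ht₀⟩ : ∃ a b, t ∈ Ioo a b ∧ t₀ ∈ Ioo a b :=
    ⟨min t t₀ - 1, max t t₀ + 1, by grind, by grind⟩
  let s := x '' Icc a b ∪ y '' Icc a b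
  have hs : IsCompact s := (isCompact_Icc.image hx_cont).union (isCompact_Icc.image hy_cont)
  obtain ⟨K, hK⟩ := (hv.locallyLipschitzOn (s := s)).exists_lipschitzOnWith_of_compact hs
  exact ODE_solution_unique_of_mem_Ioo (v := fun _ ↦ v) (s := fun _ ↦ s) (fun _ _ ↦ hK) ht₀
    (fun r hr ↦ ⟨hx r, .inl (mem_image_of_mem x (Ioo_subset_Icc_self hr))⟩)
    (fun r hr ↦ ⟨hy r, .inr (mem_image_of_mem y (Ioo_subset_Icc_self hr))⟩) h ht

end Uniqueness

/-- `q` is a global solution, with velocity `p`, of Newton's equation `q̈ = f(q)` for the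
position-dependent force `f`, written as a first-order system. -/
structure IsNewtonSolution {E : Type*} [NormedAddCommGroup E] [NormedSpace ℝ E]
    (f : E → E) (q p : ℝ → E) : Prop where
  hasDerivAt_position : ∀ t, HasDerivAt q (p t) t
  hasDerivAt_velocity : ∀ t, HasDerivAt p (f (q t)) t

namespace IsNewtonSolution

section Symmetries

variable {E : Type*} [NormedAddCommGroup E] [NormedSpace ℝ E] {f : E → E} {q p r s : ℝ → E}

theorem continuous_position (h : IsNewtonSolution f q p) : Continuous q :=
  continuous_iff_continuousAt.2 fun t ↦ (h.hasDerivAt_position t).continuousAt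

theorem continuous_velocity (h : IsNewtonSolution f q p) : Continuous p :=
  continuous_iff_continuousAt.2 fun t ↦ (h.hasDerivAt_velocity t).continuousAt

theorem comp_const_add (h : IsNewtonSolution f q p) (c : ℝ) :
    IsNewtonSolution f (fun t ↦ q (c + t)) (fun t ↦ p (c + t)) where
  hasDerivAt_position t := (h.hasDerivAt_position (c + t)).comp_const_add c t
  hasDerivAt_velocity t := (h.hasDerivAt_velocity (c + t)).comp_const_add c t

theorem comp_const_sub (h : IsNewtonSolution f q p) (c : ℝ) :
    IsNewtonSolution f (fun t ↦ q (c - t)) (fun t ↦ -p (c - t)) where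
  hasDerivAt_position t := (h.hasDerivAt_position (c - t)).comp_const_sub c t
  hasDerivAt_velocity t := by
    simpa using ((h.hasDerivAt_velocity (c - t)).comp_const_sub c t).fun_neg

theorem neg (h : IsNewtonSolution f q p) (hf : f.Odd) :
    IsNewtonSolution f (fun t ↦ -q t) (fun t ↦ -p t) where
  hasDerivAt_position t := (h.hasDerivAt_position t).fun_neg
  hasDerivAt_velocity t := by
    simpa only [hf.eq] using (h.hasDerivAt_velocity t).fun_neg

theorem position_unique (hf : LocallyLipschitz f) (h : IsNewtonSolution f q p)
    (k : IsNewtonSolution f r s) {t₀ : ℝ} (hq : q t₀ = r t₀) (hp : p t₀ = s t₀) : q = r := by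
  have hv : LocallyLipschitz fun z : E × E ↦ (z.2, f z.1) :=
    LipschitzWith.prod_snd.locallyLipschitz.prodMk
      (hf.comp LipschitzWith.prod_fst.locallyLipschitz)
  have hpair : (fun t ↦ (q t, p t)) = fun t ↦ (r t, s t) :=
    ode_solution_unique_of_locallyLipschitz hv
      (fun t ↦ (h.hasDerivAt_position t).prodMk (h.hasDerivAt_velocity t))
      (fun t ↦ (k.hasDerivAt_position t).prodMk (k.hasDerivAt_velocity t))
      (Prod.ext hq hp)
  exact funext fun t ↦ congrArg Prod.fst (congrFun hpair t)

theorem position_add_eq_position_sub (hf : LocallyLipschitz f) (h : IsNewtonSolution f q p)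
    {τ : ℝ} (hτ : p τ = 0) (t : ℝ) : q (τ + t) = q (τ - t) :=
  congrFun (position_unique hf (h.comp_const_add τ) (h.comp_const_sub τ) (t₀ := 0)
    (by simp) (by simp [hτ])) t

theorem odd_position (hf : LocallyLipschitz f) (hodd : f.Odd) (h : IsNewtonSolution f q p)
    (hq : q 0 = 0) : q.Odd := fun t ↦ by
  have hreversed := position_unique hf ((h.comp_const_sub 0).neg hodd) h (t₀ := 0)
    (by simp [hq]) (by simp)
  simpa [neg_eq_iff_eq_neg] using congrFun hreversed t

theorem antiperiodic_position (hf : LocallyLipschitz f) (hodd : f.Odd)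
    (h : IsNewtonSolution f q p) (hq : q 0 = 0) {τ : ℝ} (hτ : p τ = 0) :
    Function.Antiperiodic q (2 * τ) := fun t ↦
  calc
    q (t + 2 * τ) = q (τ + (τ + t)) := by ring_nf
    _ = q (τ - (τ + t)) := h.position_add_eq_position_sub hf hτ (τ + t)
    _ = q (-t) := by ring_nf
    _ = -q t := h.odd_position hf hodd hq t

end Symmetries

section OneDimensional

variable {f V q p : ℝ → ℝ} {E T τ : ℝ}

theorem energy_eq (hV : ∀ x, HasDerivAt V (-f x) x) (h : IsNewtonSolution f q p) (s t : ℝ) :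
    p s ^ 2 / 2 + V (q s) = p t ^ 2 / 2 + V (q t) := by
  have hderiv : ∀ u, HasDerivAt (fun u ↦ p u ^ 2 / 2 + V (q u)) 0 u := fun u ↦
    ((((h.hasDerivAt_velocity u).fun_pow 2).div_const 2).fun_add
      ((hV (q u)).comp u (h.hasDerivAt_position u))).congr_deriv (by push_cast; ring)
  exact is_const_of_deriv_eq_zero (fun u ↦ (hderiv u).differentiableAt)
    (fun u ↦ (hderiv u).deriv) s t

theorem integral_one_div_sqrt_eq_sub (hV : ∀ x, HasDerivAt V (-f x) x)
    (h : IsNewtonSolution f q p) {a b : ℝ} (hE : p a ^ 2 / 2 + V (q a) = E) (hab : a ≤ b)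
    (hp : ∀ t ∈ Ioo a b, 0 < p t) :
    ∫ x in q a..q b, 1 / √(2 * (E - V x)) = b - a := by
  have hspeed : ∀ t ∈ Ioo a b, √(2 * (E - V (q t))) = p t := fun t ht ↦ by
    have hsq : 2 * (E - V (q t)) = p t ^ 2 := by linarith [h.energy_eq hV a t]
    rw [hsq, Real.sqrt_sq (hp t ht).le]
  refine integral_one_div_eq_sub_of_hasDerivAt hab h.continuous_position.continuousOn
    (fun t ht ↦ ?_) fun t ht ↦ ?_
  · rw [hspeed t ht]
    exact h.hasDerivAt_position t
  · rw [hspeed t ht]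
    exact hp t ht

theorem exists_first_turning_time (h : IsNewtonSolution f q p) (hT : 0 < T)
    (hper : Function.Periodic q T) (hp : 0 < p 0) :
    ∃ τ > 0, p τ = 0 ∧ ∀ t ∈ Ioo 0 τ, 0 < p t := by
  obtain ⟨b, hb, hpb⟩ := exists_hasDerivAt_eq_zero hT h.continuous_position.continuousOn
    hper.eq.symm fun t _ ↦ h.hasDerivAt_position t
  obtain ⟨τ, hτ, hzero, hpos⟩ :=
    exists_first_zero h.continuous_velocity.continuousOn hb.1.le hp hpb
  exact ⟨τ, hτ.1, hzero, fun t ht ↦ hpos t (Ioo_subset_Ico_self ht)⟩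

theorem strictMonoOn_position (h : IsNewtonSolution f q p) {a b : ℝ}
    (hp : ∀ t ∈ Ioo a b, 0 < p t) : StrictMonoOn q (Icc a b) := by
  refine strictMonoOn_of_deriv_pos (convex_Icc a b) h.continuous_position.continuousOn
    fun t ht ↦ ?_
  rw [interior_Icc] at ht
  rw [(h.hasDerivAt_position t).deriv]
  exact hp t ht

theorem position_pos_of_mem_Ioc (h : IsNewtonSolution f q p) (hq : q 0 = 0)
    (hp : ∀ t ∈ Ioo 0 τ, 0 < p t) {t : ℝ} (ht : t ∈ Ioc 0 τ) : 0 < q t :=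
  hq ▸ h.strictMonoOn_position hp (left_mem_Icc.2 (ht.1.le.trans ht.2))
    (Ioc_subset_Icc_self ht) ht.1

theorem isSmallestPeriod_four_mul (hf : LocallyLipschitz f) (hodd : f.Odd)
    (h : IsNewtonSolution f q p) (hq : q 0 = 0) (hτ : 0 < τ) (hpτ : p τ = 0)
    (hp : ∀ t ∈ Ioo 0 τ, 0 < p t) : IsSmallestPeriod q (4 * τ) := by
  have hpos : ∀ t ∈ Ioo 0 (2 * τ), 0 < q t := fun t ht ↦ by
    rcases le_or_gt t τ with hle | hgt
    · exact h.position_pos_of_mem_Ioc hq hp ⟨ht.1, hle⟩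
    · rw [← add_sub_cancel τ t, h.position_add_eq_position_sub hf hpτ]
      exact h.position_pos_of_mem_Ioc hq hp ⟨by linarith [ht.2], by linarith⟩
  convert isSmallestPeriod_two_mul_of_antiperiodic (by positivity)
    (h.antiperiodic_position hf hodd hq hpτ) hpos using 1
  ring

theorem exists_amplitude_half_period_eq (hf : LocallyLipschitz f) (hodd : f.Odd)
    (hV : ∀ x, HasDerivAt V (-f x) x) (h : IsNewtonSolution f q p) (hq : q 0 = 0)
    (hp : 0 < p 0) (hE : p 0 ^ 2 / 2 + V 0 = E) (hT : IsSmallestPeriod q T) :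
    ∃ a > 0, V a = E ∧ T / 2 = 2 * ∫ x in 0..a, 1 / √(2 * (E - V x)) := by
  obtain ⟨τ, hτ, hpτ, hpos⟩ := h.exists_first_turning_time hT.1 hT.2.1 hp
  have hT_eq : T = 4 * τ :=
    hT.unique (h.isSmallestPeriod_four_mul hf hodd hq hτ hpτ hpos)
  have hE' : p 0 ^ 2 / 2 + V (q 0) = E := by rwa [hq]
  have htime : ∫ x in 0..q τ, 1 / √(2 * (E - V x)) = τ := by
    simpa only [hq, sub_zero] using h.integral_one_div_sqrt_eq_sub hV hE' hτ.le hpos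
  refine ⟨q τ, h.position_pos_of_mem_Ioc hq hpos ⟨hτ, le_rfl⟩, ?_, ?_⟩
  · simpa [hpτ] using (h.energy_eq hV τ 0).trans hE'
  · rw [htime, hT_eq]
    ring

end OneDimensional

end IsNewtonSolution

section Potential

theorem g_eq (x : ℝ) : g x = 1 - max (1 - x ^ 2) 0 ^ 4 := by
  simp only [g, ← sq_le_one_iff_abs_le_one]
  split_ifs with hx
  · rw [max_eq_left (by linarith)]
  · rw [max_eq_right (by linarith)]
    norm_num

theorem g'_eq (x : ℝ) : g' x = 8 * x * max (1 - x ^ 2) 0 ^ 3 := by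
  simp only [g', ← sq_le_one_iff_abs_le_one]
  split_ifs with hx
  · rw [max_eq_left (by linarith)]
  · rw [max_eq_right (by linarith)]
    norm_num

theorem g_zero : g 0 = 0 := by simp [g]

theorem g_one : g 1 = 1 := by simp [g]

theorem g_lt_one_iff {x : ℝ} : g x < 1 ↔ |x| < 1 := by
  rw [g_eq, sub_lt_self_iff, (by decide : Even 4).pow_pos_iff four_ne_zero,
    ← sq_lt_one_iff_abs_lt_one]
  simp

theorem hasDerivAt_g (x : ℝ) : HasDerivAt g (g' x) x := by
  have hinner : HasDerivAt (fun x : ℝ ↦ 1 - x ^ 2) (-(2 * x)) x := by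
    simpa using (hasDerivAt_pow 2 x).const_sub 1
  have hcomp := ((hasDerivAt_max_zero_pow 2 (1 - x ^ 2)).comp x hinner).const_sub 1
  rw [funext g_eq, g'_eq]
  exact hcomp.congr_deriv (by push_cast; ring)

theorem continuous_g : Continuous g :=
  continuous_iff_continuousAt.2 fun x ↦ (hasDerivAt_g x).continuousAt

theorem odd_g' : Function.Odd g' := fun x ↦ by simp [g'_eq]

theorem locallyLipschitz_g' : LocallyLipschitz g' := by
  have hinner : LocallyLipschitz fun x : ℝ ↦ (x, max (1 - x ^ 2) 0) :=
    LocallyLipschitz.id.prodMk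
      ((by fun_prop : ContDiff ℝ 1 fun x : ℝ ↦ 1 - x ^ 2).locallyLipschitz.max_const 0)
  have houter : LocallyLipschitz fun z : ℝ × ℝ ↦ 8 * z.1 * z.2 ^ 3 :=
    (by fun_prop : ContDiff ℝ 1 fun z : ℝ × ℝ ↦ 8 * z.1 * z.2 ^ 3).locallyLipschitz
  rw [funext g'_eq]
  exact houter.comp hinner

theorem strictMonoOn_g : StrictMonoOn g (Icc 0 1) := fun x hx y hy hxy ↦ by
  have hsq : x ^ 2 < y ^ 2 := pow_lt_pow_left₀ hxy hx.1 two_ne_zero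
  have hy_sq : y ^ 2 ≤ 1 := pow_le_one₀ hy.1 hy.2
  rw [g_eq, g_eq, max_eq_left (by linarith), max_eq_left (by linarith)]
  gcongr

theorem existsUnique_g_eq {y : ℝ} (hy : y ∈ Ioo (0 : ℝ) 1) :
    ∃! x : ℝ, x ∈ Ioo (0 : ℝ) 1 ∧ g x = y := by
  obtain ⟨x, hx, hgx⟩ : y ∈ g '' Ioo 0 1 :=
    intermediate_value_Ioo zero_le_one continuous_g.continuousOn (by rwa [g_zero, g_one])
  exact ⟨x, ⟨hx, hgx⟩, fun z hz ↦ strictMonoOn_g.injOn (Ioo_subset_Icc_self hz.1)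
    (Ioo_subset_Icc_self hx) (hz.2.trans hgx.symm)⟩

end Potential

namespace IsHSSol

variable {q p : ℝ → ℝ}

theorem isNewtonSolution (h : IsHSSol q p) : IsNewtonSolution (-g') q p :=
  ⟨h.1, h.2⟩

theorem half_period_eq {a T : ℝ} (h : IsHSSol q p) (hq : q 0 = 0) (hp : 0 < p 0)
    (hT : IsSmallestPeriod q T) (ha : a ∈ Ioo (0 : ℝ) 1) (hga : g a = p 0 ^ 2 / 2) :
    T / 2 = 2 * ∫ x in 0..a, 1 / √(p 0 ^ 2 - 2 * g x) := by
  have hforce_odd : Function.Odd (-g') := fun x ↦ congrArg Neg.neg (odd_g' x)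
  have hforce : ∀ x, HasDerivAt g (-(-g') x) x := by simpa using hasDerivAt_g
  have henergy : p 0 ^ 2 / 2 + g 0 = p 0 ^ 2 / 2 := by rw [g_zero, add_zero]
  obtain ⟨b, hb, hgb, hperiod⟩ := h.isNewtonSolution.exists_amplitude_half_period_eq
    locallyLipschitz_g'.neg hforce_odd hforce hq hp henergy hT
  have hga_lt : g a < 1 := g_lt_one_iff.2 ((abs_of_pos ha.1).trans_lt ha.2)
  have hb_lt : b < 1 := (le_abs_self b).trans_lt (g_lt_one_iff.1 (by rwa [hgb, ← hga]))
  have hba : b = a := strictMonoOn_g.injOn ⟨hb.le, hb_lt.le⟩ (Ioo_subset_Icc_self ha)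
    (hgb.trans hga.symm)
  rw [hperiod, hba]
  simp only [mul_sub, mul_div_cancel₀ _ (two_ne_zero' ℝ)]

end IsHSSol

/-- For every `p₀ ∈ (0, √2)` there is a unique `q̃ ∈ (0,1)` with `g(q̃) = p₀²/2`, and the
half-period satisfies `𝒯(p₀)/2 = 2 ∫₀^q̃ dq / √(p₀² − 2 g(q))`. -/
theorem stmt_10 (F : ℝ → ℝ → ℝ → ℝ × ℝ) (hF : IsHSFlow F)
    (T : ℝ → ℝ) (hT : IsPeriodMap F T) :
    ∀ p₀ ∈ Ioo (0:ℝ) (Real.sqrt 2),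
      (∃! qt : ℝ, qt ∈ Ioo (0:ℝ) 1 ∧ g qt = p₀ ^ 2 / 2) ∧
      ∀ qt : ℝ, qt ∈ Ioo (0:ℝ) 1 → g qt = p₀ ^ 2 / 2 →
        T p₀ / 2 = 2 * ∫ x in (0:ℝ)..qt, 1 / Real.sqrt (p₀ ^ 2 - 2 * g x) := by
  intro p₀ hp₀
  have hp₀_sq : p₀ ^ 2 < 2 := (Real.lt_sqrt hp₀.1.le).1 hp₀.2
  refine ⟨existsUnique_g_eq ⟨half_pos (pow_pos hp₀.1 2), by linarith⟩, fun qt hqt hg ↦ ?_⟩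
  obtain ⟨hsol, hinit⟩ := hF 0 p₀
  have hq : (F 0 0 p₀).1 = 0 := congrArg Prod.fst hinit
  have hp : (F 0 0 p₀).2 = p₀ := congrArg Prod.snd hinit
  simpa only [hp] using
    hsol.half_period_eq hq (hp.symm ▸ hp₀.1) (hT p₀ hp₀) hqt (hp.symm ▸ hg)
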